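/- Chi-squared concentration underlying the Johnson–Lindenstrauss Lemma: Let Z be a random variable with the chi-squared distribution with d degrees of freedom. Then for every ε ∈ (0, 1/2], ℙ(|Z/d − 1| ≥ ε) ≤ 2 exp(−d ε² / 8). -/

import Mathlib

open MeasureTheory ProbabilityTheory

lemma chi_aux_ineq {s : ℝ} (h1 : -(1/2) ≤ s) (h2 : s ≤ 1/2) :
    1 + s ≤ Real.exp (s - s ^ 2 / 4) := by
  rcases le_total 0 s with h | h
  · have hy : 0 ≤ s - s ^ 2 / 4 := by nlinarith
    have := Real.quadratic_le_exp_of_nonneg hy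
    have h3 : (7 / 8 : ℝ) ^ 2 ≤ (1 - s / 4) ^ 2 := by
      apply pow_le_pow_left₀ <;> linarith
    nlinarith [mul_le_mul_of_nonneg_left h3 (sq_nonneg s), sq_nonneg s]
  · obtain ⟨e, rfl⟩ : ∃ e, s = -e := ⟨-s, by ring⟩
    have he : 0 ≤ e := by linarith
    have he2 : e ≤ 1 / 2 := by linarith
    have hy : 0 ≤ e + e ^ 2 / 4 := by positivity
    have hy1 : e + e ^ 2 / 4 ≤ 1 := by nlinarith
    have hb := Real.exp_bound' hy hy1 (n := 2) (by norm_num)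
    norm_num [Finset.sum_range_succ, Nat.factorial] at hb
    have e1 : -e - (-e) ^ 2 / 4 = -(e + e ^ 2 / 4) := by ring
    rw [e1, Real.exp_neg, ← one_div, le_div_iff₀ (Real.exp_pos _)]
    have h0 : 0 ≤ 1 + -e := by linarith
    refine (mul_le_mul_of_nonneg_left hb h0).trans ?_
    have h3 : 0 ≤ e ^ 3 := by positivity
    have h4 : 0 ≤ e ^ 3 * e ^ 2 := by positivity
    have h5 : 0 ≤ e ^ 3 * e := by positivity
    nlinarith

lemma chi_aux_tail {a s : ℝ} (ha : 0 < a) (h1 : -(1/2) ≤ s) (h2 : s ≤ 1/2) :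
    gammaMeasure a (1 / 2) {x | s / (2 * (1 + s)) * (2 * a * (1 + s)) ≤ s / (2 * (1 + s)) * x}
      ≤ ENNReal.ofReal (Real.exp (-(2 * a * s ^ 2) / 8)) := by
  have hs : 0 < 1 + s := by linarith
  set t := s / (2 * (1 + s)) with ht
  have hm : Measurable (fun x : ℝ => ENNReal.ofReal (Real.exp (t * x - a * s))) := by fun_prop
  have hg : Measurable (gammaPDF a (1 / 2)) := (measurable_gammaPDFReal _ _).ennreal_ofReal
  have hg2 : Measurable (gammaPDF a (1 / (2 * (1 + s)))) :=
    (measurable_gammaPDFReal _ _).ennreal_ofReal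
  have hmk := mul_meas_ge_le_lintegral (μ := gammaMeasure a (1 / 2)) hm 1
  rw [one_mul] at hmk
  have hset : {x | t * (2 * a * (1 + s)) ≤ t * x}
      ⊆ {x | 1 ≤ ENNReal.ofReal (Real.exp (t * x - a * s))} := by
    intro x hx
    simp only [Set.mem_ofPred_eq] at hx ⊢
    rw [ENNReal.one_le_ofReal, Real.one_le_exp_iff]
    have : t * (2 * a * (1 + s)) = a * s := by rw [ht]; field_simp
    linarith
  refine (measure_mono hset).trans (hmk.trans ?_)
  rw [gammaMeasure, lintegral_withDensity_eq_lintegral_mul _ hg hm]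
  have key : ∀ x, (gammaPDF a (1 / 2) * fun x : ℝ => ENNReal.ofReal (Real.exp (t * x - a * s))) x
      = ENNReal.ofReal (Real.exp (-(a * s)) * (1 + s) ^ a) * gammaPDF a (1 / (2 * (1 + s))) x := by
    intro x
    rw [Pi.mul_apply]
    rcases lt_or_ge x 0 with hx | hx
    · rw [gammaPDF_of_neg hx, gammaPDF_of_neg hx]; simp
    · rw [gammaPDF_of_nonneg hx, gammaPDF_of_nonneg hx, ← ENNReal.ofReal_mul' (by positivity),
        ← ENNReal.ofReal_mul (by positivity)]
      congr 1
      have e1 : (1 / 2 : ℝ) ^ a = (1 + s) ^ a * (1 / (2 * (1 + s))) ^ a := by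
        rw [← Real.mul_rpow hs.le (by positivity)]
        congr 1; field_simp
      have e2 : Real.exp (-(1 / 2 * x)) * Real.exp (t * x - a * s)
          = Real.exp (-(a * s)) * Real.exp (-(1 / (2 * (1 + s)) * x)) := by
        rw [← Real.exp_add, ← Real.exp_add]
        congr 1; rw [ht]; field_simp; ring
      rw [e1, mul_assoc, e2]; ring
  rw [lintegral_congr key, lintegral_const_mul _ hg2,
    lintegral_gammaPDF_eq_one ha (by positivity), mul_one]
  apply ENNReal.ofReal_le_ofReal
  calc _ ≤ Real.exp (-(a * s)) * (Real.exp (s - s ^ 2 / 4)) ^ a := by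
        gcongr; exact chi_aux_ineq h1 h2
    _ = _ := by
        rw [← Real.exp_mul, ← Real.exp_add]; congr 1; ring

/-- **Chi-squared concentration underlying the Johnson–Lindenstrauss Lemma.**  If `Z` has
the chi-squared distribution with `d` degrees of freedom (i.e. the `Gamma(d/2, 1/2)`
distribution), then for every `ε ∈ (0, 1/2]`,
`ℙ(|Z/d − 1| ≥ ε) ≤ 2 exp(−d ε² / 8)`. -/
theorem chi_squared_concentration {d : ℕ}
    {Ω : Type*} [MeasureSpace Ω] [IsProbabilityMeasure (ℙ : Measure Ω)]
    (Z : Ω → ℝ) (hZ : Measure.map Z ℙ = gammaMeasure (d / 2 : ℝ) (1 / 2 : ℝ))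
    {ε : ℝ} (hε : ε ∈ Set.Ioc (0 : ℝ) (1 / 2)) :
    ℙ {ω | ε ≤ |Z ω / d - 1|} ≤ ENNReal.ofReal (2 * Real.exp (-(d * ε ^ 2) / 8)) := by
  obtain ⟨h0, h1⟩ := hε
  rcases Nat.eq_zero_or_pos d with rfl | hd
  · refine prob_le_one.trans ?_
    simp
  have hd' : (0 : ℝ) < d := by exact_mod_cast hd
  have ha : (0 : ℝ) < d / 2 := by positivity
  have hprob := isProbabilityMeasure_gammaMeasure ha (r := 1 / 2) (by norm_num)
  have hae : AEMeasurable Z ℙ := by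
    apply AEMeasurable.of_map_ne_zero
    rw [hZ]
    exact IsProbabilityMeasure.ne_zero _
  have hms : MeasurableSet {x : ℝ | ε ≤ |x / d - 1|} :=
    measurableSet_le measurable_const (by fun_prop)
  have e0 : ℙ {ω | ε ≤ |Z ω / d - 1|} = gammaMeasure (d / 2 : ℝ) (1 / 2 : ℝ)
      {x : ℝ | ε ≤ |x / d - 1|} := by
    rw [← hZ, Measure.map_apply_of_aemeasurable hae hms]; rfl
  rw [e0]
  have b1 := chi_aux_tail ha (s := ε) (by linarith) h1
  have b2 := chi_aux_tail ha (s := -ε) (by linarith) (by linarith)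
  have e3 : (2 : ℝ) * (d / 2) = d := by ring
  rw [e3] at b1 b2
  rw [neg_sq] at b2
  rw [two_mul, ENNReal.ofReal_add (by positivity) (by positivity)]
  refine (measure_mono ?_).trans ((measure_union_le _ _).trans (add_le_add b1 b2))
  intro x hx
  simp only [Set.mem_ofPred_eq, Set.mem_union] at hx ⊢
  rcases le_abs.1 hx with h | h
  · left
    apply mul_le_mul_of_nonneg_left _ (by positivity)
    have : 1 + ε ≤ x / d := by linarith
    rw [le_div_iff₀ hd'] at this
    linarith
  · right
    apply mul_le_mul_of_nonpos_left
    · have : x / d ≤ 1 + -ε := by linarith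
      rw [div_le_iff₀ hd'] at this
      linarith
    · apply div_nonpos_of_nonpos_of_nonneg <;> linarith
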